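/- arXiv:1202.2287 — 2 statements merged into one kernel-verified Lean document; each statement's English description precedes it below -/
import Mathlib

section
/- Let X be a poset and φ a quasi-deflation on X. Then for every x ∈ X, φ(x) ⋘ x, i.e. the finite set E with φ(x) = ↑E approximates x: every directed family in X whose least upper bound is above x has some member in φ(x). -/
/-! A quasi-deflation `φ` is Scott-continuous, hence monotone, and has finite image. On a directed
set `d` with supremum `a` its values therefore have a greatest one, `φ z` with `z ∈ d`; by
continuity `φ a ≤ φ z`. In reverse inclusion order `φ x ≤ φ a ≤ φ z`, so `z ∈ φ z ⊆ φ x`. -/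

open Set TopologicalSpace

universe u v

section ScottTopology

variable {α : Type u}

/-- A Scott-open subset of a preorder: an upward-closed set that is inaccessible by
directed suprema. -/
def ScottOpen [Preorder α] (U : Set α) : Prop :=
  IsUpperSet U ∧ ∀ d : Set α, d.Nonempty → DirectedOn (· ≤ ·) d →
    ∀ a : α, IsLUB d a → a ∈ U → (d ∩ U).Nonempty

/-- The Scott topology on a preorder. -/
def scottTop (α : Type u) [Preorder α] : TopologicalSpace α where
  IsOpen := ScottOpen
  isOpen_univ := by
    refine ⟨isUpperSet_univ, ?_⟩
    intro d hd _ a _ _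
    obtain ⟨x, hx⟩ := hd
    exact ⟨x, hx, trivial⟩
  isOpen_inter := by
    rintro U V ⟨hU, hU'⟩ ⟨hV, hV'⟩
    refine ⟨hU.inter hV, ?_⟩
    intro d hd hdir a ha hmem
    obtain ⟨x, hxd, hxU⟩ := hU' d hd hdir a ha hmem.1
    obtain ⟨y, hyd, hyV⟩ := hV' d hd hdir a ha hmem.2
    obtain ⟨z, hzd, hxz, hyz⟩ := hdir x hxd y hyd
    exact ⟨z, hzd, hU hxz hxU, hV hyz hyV⟩
  isOpen_sUnion := by
    intro S hS
    constructor
    · intro a b hab ha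
      obtain ⟨U, hUS, haU⟩ := ha
      exact ⟨U, hUS, (hS U hUS).1 hab haU⟩
    · intro d hd hdir a ha hmem
      obtain ⟨U, hUS, haU⟩ := hmem
      obtain ⟨x, hxd, hxU⟩ := (hS U hUS).2 d hd hdir a ha haU
      exact ⟨x, hxd, U, hUS, hxU⟩

/-- A dcpo: every nonempty directed subset has a least upper bound. -/
def IsDcpo (α : Type u) [Preorder α] : Prop :=
  ∀ d : Set α, d.Nonempty → DirectedOn (· ≤ ·) d → ∃ a : α, IsLUB d a

/-- The upward closure `↑E = {x | ∃ e ∈ E, e ≤ x}` of a set. -/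
def upClos [Preorder α] (E : Set α) : Set α := {x | ∃ e ∈ E, e ≤ x}

/-- A finitary compact: a set of the form `↑E` with `E` finite and nonempty. -/
def IsFinitaryCompact [Preorder α] (A : Set α) : Prop :=
  ∃ E : Set α, E.Finite ∧ E.Nonempty ∧ A = upClos E

/-- `Fin(α)`: the nonempty finitary compacts of `α`, ordered by reverse inclusion. -/
def FinCompacts (α : Type u) [Preorder α] : Type u := {A : Set α // IsFinitaryCompact A}

instance FinCompacts.instPartialOrder [Preorder α] : PartialOrder (FinCompacts α) where
  le A B := B.1 ⊆ A.1
  le_refl A := subset_rfl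
  le_trans A B C h1 h2 := subset_trans h2 h1
  le_antisymm A B h1 h2 := Subtype.ext (subset_antisymm h2 h1)

/-- `U ⋘ x`: every directed family whose least upper bound is above `x` has some
member in `U`. -/
def approxes [Preorder α] (U : Set α) (x : α) : Prop :=
  ∀ d : Set α, d.Nonempty → DirectedOn (· ≤ ·) d →
    ∀ a : α, IsLUB d a → x ≤ a → ∃ z ∈ d, z ∈ U

/-- A quasi-deflation: a map `φ : α → Fin_σ(α)`, continuous for the Scott topologies,
such that `x ∈ φ x` for every `x`, and with finite image. -/
def IsQuasiDeflation [Preorder α] (φ : α → FinCompacts α) : Prop :=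
  @Continuous α (FinCompacts α) (scottTop α) (scottTop (FinCompacts α)) φ ∧
  (∀ x : α, x ∈ (φ x).1) ∧ (Set.range φ).Finite

/-- A generating family of quasi-deflations: a (nonempty) family of quasi-deflations,
directed in the pointwise reverse-inclusion order, with `⋂ i, φ i x = ↑x` for all `x`. -/
def IsGeneratingFamily [Preorder α] {I : Type v} (φ : I → α → FinCompacts α) : Prop :=
  Nonempty I ∧
  (∀ i j : I, ∃ k : I, (∀ x, (φ k x).1 ⊆ (φ i x).1) ∧ (∀ x, (φ k x).1 ⊆ (φ j x).1)) ∧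
  (∀ i, IsQuasiDeflation (φ i)) ∧
  (∀ x : α, (⋂ i, (φ i x).1) = Set.Ici x)

/-- A QRB-domain: a pointed dcpo with a generating family of quasi-deflations. -/
def IsQRBDomain (α : Type u) [PartialOrder α] : Prop :=
  IsDcpo α ∧ (∃ b : α, ∀ x, b ≤ x) ∧
  ∃ (I : Type u) (φ : I → α → FinCompacts α), IsGeneratingFamily φ

/-- An ωQRB-domain: a pointed dcpo with a countable generating family of
quasi-deflations. -/
def IsOmegaQRBDomain (α : Type u) [PartialOrder α] : Prop :=
  IsDcpo α ∧ (∃ b : α, ∀ x, b ≤ x) ∧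
  ∃ (I : Type u), Countable I ∧
    ∃ φ : I → α → FinCompacts α, IsGeneratingFamily φ

/-- A deflation on a pointed dcpo: a Scott-continuous map below the identity, with
finite image. -/
def IsDeflation [Preorder α] (f : α → α) : Prop :=
  @Continuous α α (scottTop α) (scottTop α) f ∧ (∀ x, f x ≤ x) ∧ (Set.range f).Finite

/-- An RB-domain: a pointed dcpo with a directed family of deflations whose pointwise
least upper bound is the identity. -/
def IsRBDomain (α : Type u) [PartialOrder α] : Prop :=
  IsDcpo α ∧ (∃ b : α, ∀ x, b ≤ x) ∧
  ∃ (I : Type u) (f : I → α → α), Nonempty I ∧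
    (∀ i j : I, ∃ k : I, (∀ x, f i x ≤ f k x) ∧ (∀ x, f j x ≤ f k x)) ∧
    (∀ i, IsDeflation (f i)) ∧
    ∀ x : α, IsLUB (Set.range fun i => f i x) x

/-- An ωB-domain (SFP-domain): a pointed dcpo with a non-decreasing sequence of
idempotent deflations whose pointwise least upper bound is the identity. -/
def IsOmegaBDomain (α : Type u) [PartialOrder α] : Prop :=
  IsDcpo α ∧ (∃ b : α, ∀ x, b ≤ x) ∧
  ∃ f : ℕ → α → α,
    (∀ i, IsDeflation (f i)) ∧
    (∀ i, ∀ x, f i (f i x) = f i x) ∧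
    (∀ i j : ℕ, i ≤ j → ∀ x, f i x ≤ f j x) ∧
    ∀ x : α, IsLUB (Set.range fun i => f i x) x

/-- A map finitely separated from the identity. -/
def IsFinitelySeparated [Preorder α] (f : α → α) : Prop :=
  ∃ M : Set α, M.Finite ∧ ∀ x : α, ∃ m ∈ M, f x ≤ m ∧ m ≤ x

/-- An FS-domain: a pointed dcpo with a directed family of continuous maps, each
finitely separated from the identity, whose pointwise least upper bound is the
identity. -/
def IsFSDomain (α : Type u) [PartialOrder α] : Prop :=
  IsDcpo α ∧ (∃ b : α, ∀ x, b ≤ x) ∧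
  ∃ (I : Type u) (f : I → α → α), Nonempty I ∧
    (∀ i j : I, ∃ k : I, (∀ x, f i x ≤ f k x) ∧ (∀ x, f j x ≤ f k x)) ∧
    (∀ i, @Continuous α α (scottTop α) (scottTop α) (f i) ∧ IsFinitelySeparated (f i)) ∧
    ∀ x : α, IsLUB (Set.range fun i => f i x) x

/-- A controlled QRB-domain: a pointed dcpo with a directed family of controlled
quasi-deflations `(f i, φ i)` (i.e. `φ i x ⊆ ↑(f i x)`) with `x = sup_i f i x`. -/
def IsControlledQRBDomain (α : Type u) [PartialOrder α] : Prop :=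
  IsDcpo α ∧ (∃ b : α, ∀ x, b ≤ x) ∧
  ∃ (I : Type u) (f : I → α → α) (φ : I → α → FinCompacts α), Nonempty I ∧
    (∀ i j : I, ∃ k : I,
      ((∀ x, f i x ≤ f k x) ∧ ∀ x, (φ k x).1 ⊆ (φ i x).1) ∧
      ((∀ x, f j x ≤ f k x) ∧ ∀ x, (φ k x).1 ⊆ (φ j x).1)) ∧
    (∀ i, @Continuous α α (scottTop α) (scottTop α) (f i) ∧ IsQuasiDeflation (φ i) ∧
      ∀ x, (φ i x).1 ⊆ Set.Ici (f i x)) ∧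
    ∀ x : α, IsLUB (Set.range fun i => f i x) x

/-- A continuous dcpo: for every `x`, the set of elements way-below `x` is
(nonempty and) directed and has `x` as least upper bound. -/
def IsContinuousDcpo (α : Type u) [Preorder α] : Prop :=
  IsDcpo α ∧ ∀ x : α,
    {y : α | approxes (Set.Ici y) x}.Nonempty ∧
    DirectedOn (· ≤ ·) {y : α | approxes (Set.Ici y) x} ∧
    IsLUB {y : α | approxes (Set.Ici y) x} x

/-- The finitary compacts `↑E` (E finite nonempty) that approximate `x`. -/
def finUpsBelow [Preorder α] (x : α) : Set (Set α) :=
  {A | (∃ E : Set α, E.Finite ∧ E.Nonempty ∧ A = upClos E) ∧ approxes A x}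

/-- A quasi-continuous dcpo. -/
def IsQuasiContinuous (α : Type u) [Preorder α] : Prop :=
  IsDcpo α ∧ ∀ x : α,
    (finUpsBelow x).Nonempty ∧
    DirectedOn (fun A B : Set α => B ⊆ A) (finUpsBelow x) ∧
    ⋂₀ finUpsBelow x = Set.Ici x

/-- The upper Vietoris topology on `Fin(α)` (the subspace topology induced from the
Smyth powerspace of `α` with its Scott topology), generated by the sets
`◻U = {↑E | ↑E ⊆ U}` for `U` Scott-open. -/
def finUpperVietoris (α : Type u) [Preorder α] : TopologicalSpace (FinCompacts α) :=
  TopologicalSpace.generateFrom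
    {S | ∃ U : Set α, ScottOpen U ∧ S = {A : FinCompacts α | A.1 ⊆ U}}

end ScottTopology

section Spaces

variable {X : Type u} {Y : Type v}

/-- The specialization preorder of a topological space: `x ≤ y` iff every open set
containing `x` contains `y`. -/
def specLE [TopologicalSpace X] (x y : X) : Prop :=
  ∀ U : Set X, IsOpen U → x ∈ U → y ∈ U

/-- `↑x` in the specialization preorder. -/
def specUp [TopologicalSpace X] (x : X) : Set X := {y | specLE x y}

/-- Upward closure of a set in the specialization preorder. -/
def specUpSet [TopologicalSpace X] (A : Set X) : Set X := {y | ∃ a ∈ A, specLE a y}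

/-- Downward closure of a set in the specialization preorder. -/
def specDownSet [TopologicalSpace X] (A : Set X) : Set X := {x | ∃ a ∈ A, specLE x a}

/-- A saturated set: one that is upward closed in the specialization preorder. -/
def IsSaturatedSet [TopologicalSpace X] (A : Set X) : Prop :=
  ∀ x ∈ A, ∀ y : X, specLE x y → y ∈ A

/-- A coherent space: the intersection of any two compact saturated subsets is
compact. -/
def IsCoherent (X : Type u) [TopologicalSpace X] : Prop :=
  ∀ Q₁ Q₂ : Set X, IsCompact Q₁ → IsSaturatedSet Q₁ → IsCompact Q₂ → IsSaturatedSet Q₂ →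
    IsCompact (Q₁ ∩ Q₂)

/-- A stably compact space: T0, compact, locally compact, sober and coherent. -/
def IsStablyCompact (X : Type u) [TopologicalSpace X] : Prop :=
  T0Space X ∧ CompactSpace X ∧ LocallyCompactSpace X ∧ QuasiSober X ∧ IsCoherent X

/-- A proper map: continuous, the downward closure of the image of any closed set is
closed, and the preimage of `↑y` is compact for every `y`. -/
def PaperProper [TopologicalSpace X] [TopologicalSpace Y] (r : X → Y) : Prop :=
  Continuous r ∧
  (∀ F : Set X, IsClosed F → IsClosed (specDownSet (r '' F))) ∧
  ∀ y : Y, IsCompact (r ⁻¹' specUp y)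

/-- The Smyth powerspace: nonempty compact saturated subsets. -/
def SmythP (X : Type u) [TopologicalSpace X] : Type u :=
  {Q : Set X // Q.Nonempty ∧ IsCompact Q ∧ IsSaturatedSet Q}

/-- The upper Vietoris topology on the Smyth powerspace, generated by the sets
`◻U = {Q | Q ⊆ U}`, `U` open. -/
instance SmythP.instTopologicalSpace [TopologicalSpace X] : TopologicalSpace (SmythP X) :=
  TopologicalSpace.generateFrom
    {S | ∃ U : Set X, IsOpen U ∧ S = {Q : SmythP X | Q.1 ⊆ U}}

/-- The order on the Smyth powerspace: reverse inclusion. -/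
instance SmythP.instPartialOrder [TopologicalSpace X] : PartialOrder (SmythP X) where
  le Q Q' := Q'.1 ⊆ Q.1
  le_refl Q := subset_rfl
  le_trans Q Q' Q'' h1 h2 := subset_trans h2 h1
  le_antisymm Q Q' h1 h2 := Subtype.ext (subset_antisymm h2 h1)

/-- A quasi-retraction `r : X → Y`: a continuous map admitting a continuous
quasi-section `ς : Y → S_V(X)` with `↑{r x | x ∈ ς y} = ↑y` for every `y`. -/
def IsQuasiRetraction [TopologicalSpace X] [TopologicalSpace Y] (r : X → Y) : Prop :=
  Continuous r ∧
  ∃ ς : Y → SmythP X, Continuous ς ∧ ∀ y : Y, specUpSet (r '' (ς y).1) = specUp y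

/-- The specialization ordering of a T0 space, as a partial order. -/
def specOrder (X : Type u) [TopologicalSpace X] [T0Space X] : PartialOrder X where
  le := specLE
  le_refl x := fun _ _ h => h
  le_trans x y z h1 h2 := fun U hU hx => h2 U hU (h1 U hU hx)
  le_antisymm x y h1 h2 :=
    (inseparable_iff_forall_isOpen.mpr fun U hU => ⟨h1 U hU, h2 U hU⟩).eq

/-- A continuous probability valuation on a topological space: a map from opens to
nonnegative reals that is strict, monotone, modular, continuous (preserves directed
suprema of opens) and normalized. -/
structure IsProbValuation [TopologicalSpace X] (ν : Opens X → NNReal) : Prop where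
  empty : ν ⊥ = 0
  mono : ∀ U V : Opens X, U ≤ V → ν U ≤ ν V
  modular : ∀ U V : Opens X, ν (U ⊔ V) + ν (U ⊓ V) = ν U + ν V
  scont : ∀ S : Set (Opens X), S.Nonempty → DirectedOn (· ≤ ·) S →
    ν (sSup S) = ⨆ U ∈ S, ν U
  total : ν ⊤ = 1

/-- `V_1(X)`: the probability valuations on `X`, ordered pointwise. -/
abbrev ProbVal (X : Type u) [TopologicalSpace X] : Type u :=
  {ν : Opens X → NNReal // IsProbValuation ν}

/-- The weak topology on `V_1(X)`, generated by the sets `[U > a]`. -/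
def weakTop (X : Type u) [TopologicalSpace X] : TopologicalSpace (ProbVal X) :=
  TopologicalSpace.generateFrom
    {S | ∃ (U : Opens X) (a : ℝ), S = {ν : ProbVal X | a < (ν.1 U : ℝ)}}

/-- `ν†(Q) = inf {ν U | U open, Q ⊆ U}`. -/
noncomputable def dagVal [TopologicalSpace X] (ν : Opens X → NNReal) (Q : Set X) :
    NNReal :=
  ⨅ U : {U : Opens X // Q ⊆ U.1}, ν U.1

end Spaces

section Paths

variable {Y : Type u}

/-- A path in a pointed poset: a finite covering chain starting at the least
element. -/
def IsPathIn [PartialOrder Y] (bot : Y) (S : Set Y) : Prop :=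
  ∃ (n : ℕ) (c : Fin (n + 1) → Y), c 0 = bot ∧
    (∀ i : Fin n, c i.castSucc ⋖ c i.succ) ∧ S = Set.range c

/-- The path space `Π(Y)` of a pointed poset, ordered by inclusion. -/
abbrev PathSpace (Y : Type u) [PartialOrder Y] (bot : Y) : Type u :=
  {S : Set Y // IsPathIn bot S}

end Paths

theorem scottOpen_not_le {β : Type u} [Preorder β] (b : β) : ScottOpen {c : β | ¬ c ≤ b} := by
  refine ⟨fun c c' h hc hc' => hc (h.trans hc'), fun d _ _ a ha hab => ?_⟩
  by_contra hne
  refine hab (ha.2 fun c hc => ?_)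
  by_contra hcb
  exact hne ⟨c, hc, hcb⟩

/-- The only consequence of the continuity of `φ` that the argument needs. -/
theorem IsQuasiDeflation.scottOpen_not_le {α : Type u} [PartialOrder α]
    {φ : α → FinCompacts α} (hφ : IsQuasiDeflation φ) (y : α) :
    ScottOpen {w : α | ¬ φ w ≤ φ y} :=
  (@Continuous.isOpen_preimage _ _ (scottTop α) (scottTop _) φ hφ.1 _
    (_root_.scottOpen_not_le (φ y)) :)

theorem IsQuasiDeflation.monotone {α : Type u} [PartialOrder α]
    {φ : α → FinCompacts α} (hφ : IsQuasiDeflation φ) : Monotone φ := by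
  intro x y hxy
  by_contra h
  exact (hφ.scottOpen_not_le y).1 hxy h le_rfl

/-- If `φ` is a quasi-deflation on a poset `X`, then `φ x ⋘ x` for every `x`: every
directed family whose least upper bound is above `x` has some member in `φ x`. -/
theorem quasiDeflation_approxes {α : Type u} [PartialOrder α]
    (φ : α → FinCompacts α) (hφ : IsQuasiDeflation φ) (x : α) :
    approxes (φ x).1 x := by
  intro d hd hdir a ha hxa
  obtain ⟨z, hzd, hz⟩ := Set.Finite.exists_maximalFor' φ d
    (hφ.2.2.subset (Set.image_subset_range φ d)) hd
  -- A maximal value on a directed set is the greatest one.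
  have hmax : ∀ w ∈ d, φ w ≤ φ z := fun w hw => by
    obtain ⟨v, hv, hwv, hzv⟩ := hdir w hw z hzd
    exact (hφ.monotone hwv).trans (hz hv (hφ.monotone hzv))
  have haz : φ a ≤ φ z := by
    by_contra h
    obtain ⟨w, hw, hwz⟩ := (hφ.scottOpen_not_le z).2 d hd hdir a ha h
    exact hwz (hmax w hw)
  have hxz : φ x ≤ φ z := (hφ.monotone hxa).trans haz
  exact ⟨z, hzd, hxz (hφ.2.1 z)⟩
end

section
/- Let X be a dcpo. On Fin(X), the set of nonempty finitary compacts of X ordered by reverse inclusion, the Scott topology is finer than the subspace topology induced by the upper Vietoris topology of the Smyth powerspace; and if X is a quasi-continuous dcpo, the two topologies coincide. -/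
/-!
Everything rests on Rudin's lemma: if a family `F` of finitary compacts of a dcpo is filtered and an
upper set `B` satisfies `B ⋘ x` for all `x ∈ ⋂ F`, then some member of `F` lies in `B`
(`exists_subset_of_approxes`). Otherwise Zorn's lemma yields a minimal lower set `L` disjoint
from `B` that meets every member of `F`; minimality makes `L` directed, its supremum lies
in `⋂ F`, and so `B` meets `L`, a contradiction.

Suprema in `Fin(X)` are intersections, since every `↑x` with `x ∈ ⋂ d` is itself an upper bound of
`d`. So Rudin's lemma, applied to a Scott-open `B = U`, says exactly that `◻U` is Scott-open.

If `X` is quasi-continuous, Rudin's lemma also shows that `{x | B ⋘ x}` is Scott-open for every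
upper set `B`. Each `↑E` is the filtered intersection of the finitary compacts `B` with `B ⋘ e` for
all `e ∈ E`; hence a Scott-open `S ∋ ↑E` contains such a `B`, and
`↑E ∈ ◻{x | B ⋘ x} ⊆ ◻B ⊆ S`.
-/

open Set TopologicalSpace

universe u v

section

variable {X : Type u} [PartialOrder X]

lemma isUpperSet_upClos (E : Set X) : IsUpperSet (upClos E) := by
  rintro x y hxy ⟨e, he, hex⟩
  exact ⟨e, he, hex.trans hxy⟩

lemma upClos_singleton (x : X) : upClos {x} = Ici x := by
  ext y
  simp [upClos]

lemma IsFinitaryCompact.isUpperSet {A : Set X} (hA : IsFinitaryCompact A) : IsUpperSet A := by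
  obtain ⟨E, -, -, rfl⟩ := hA
  exact isUpperSet_upClos E

lemma isFinitaryCompact_Ici (x : X) : IsFinitaryCompact (Ici x) :=
  ⟨{x}, finite_singleton x, singleton_nonempty x, (upClos_singleton x).symm⟩

lemma IsFinitaryCompact.biUnion {E : Set X} (hE : E.Finite) (hne : E.Nonempty)
    {B : X → Set X} (hB : ∀ e ∈ E, IsFinitaryCompact (B e)) :
    IsFinitaryCompact (⋃ e ∈ E, B e) := by
  choose! G hfin hGne hG using hB
  refine ⟨⋃ e ∈ E, G e, hE.biUnion hfin, ?_, ?_⟩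
  · obtain ⟨e, he⟩ := hne
    obtain ⟨g, hg⟩ := hGne e he
    exact ⟨g, mem_biUnion he hg⟩
  · ext x
    simp only [mem_iUnion, upClos, mem_ofPred_eq, exists_prop]
    constructor
    · rintro ⟨e, he, hx⟩
      rw [hG e he] at hx
      obtain ⟨g, hg, hgx⟩ := hx
      exact ⟨g, ⟨e, he, hg⟩, hgx⟩
    · rintro ⟨g, ⟨e, he, hg⟩, hgx⟩
      refine ⟨e, he, ?_⟩
      rw [hG e he]
      exact ⟨g, hg, hgx⟩

lemma approxes.mono {A B : Set X} {x y : X} (h : approxes A x) (hAB : A ⊆ B) (hxy : x ≤ y) :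
    approxes B y := by
  intro d hd hdir a ha hya
  obtain ⟨z, hz, hzA⟩ := h d hd hdir a ha (hxy.trans hya)
  exact ⟨z, hz, hAB hzA⟩

lemma approxes.mem {A : Set X} {x : X} (h : approxes A x) : x ∈ A := by
  obtain ⟨z, rfl, hz⟩ := h {x} (singleton_nonempty x) (directedOn_singleton x) x
    isLUB_singleton le_rfl
  exact hz

lemma ScottOpen.approxes {U : Set X} (hU : ScottOpen U) {x : X} (hx : x ∈ U) :
    approxes U x := fun d hd hdir a ha hxa => hU.2 d hd hdir a ha (hU.1 hxa hx)

/-- The chain condition for Zorn's lemma: a finitary compact `↑E` that meets every member of a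
chain of lower sets meets the intersection, because `E` is finite. -/
lemma inter_sInter_nonempty {c : Set (Set X)} (hc : IsChain (· ⊆ ·) c) (hcne : c.Nonempty)
    (hlow : ∀ L ∈ c, IsLowerSet L) {A : Set X} (hA : IsFinitaryCompact A)
    (hmeet : ∀ L ∈ c, (L ∩ A).Nonempty) : (⋂₀ c ∩ A).Nonempty := by
  obtain ⟨E, hE, -, rfl⟩ := hA
  by_contra hcon
  have hcov : E ⊆ ⋃₀ (compl '' c) := by
    intro e he
    by_contra hne
    refine hcon ⟨e, fun L hL => ?_, e, he, le_rfl⟩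
    by_contra heL
    exact hne ⟨Lᶜ, mem_image_of_mem _ hL, heL⟩
  have hdir : DirectedOn (· ⊆ ·) (compl '' c) := by
    rintro _ ⟨L, hL, rfl⟩ _ ⟨M, hM, rfl⟩
    rcases hc.total hL hM with h | h
    · exact ⟨Lᶜ, mem_image_of_mem _ hL, subset_rfl, compl_subset_compl.2 h⟩
    · exact ⟨Mᶜ, mem_image_of_mem _ hM, compl_subset_compl.2 h, subset_rfl⟩
  obtain ⟨_, ⟨L, hL, rfl⟩, hEL⟩ :=
    hdir.exists_mem_subset_of_finite_of_subset_sUnion (hcne.image _) hE hcov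
  obtain ⟨x, hxL, e, he, hex⟩ := hmeet L hL
  exact hEL he (hlow L hL hex hxL)

/-- **Rudin's lemma**, for an upper set `B` that approximates every point of the intersection
of a filtered family of finitary compacts, rather than only for a Scott-open `B`. -/
lemma exists_subset_of_approxes (hX : IsDcpo X) {F : Set (Set X)} (hne : F.Nonempty)
    (hF : ∀ A ∈ F, IsFinitaryCompact A) (hdir : DirectedOn (fun A B : Set X => B ⊆ A) F)
    {B : Set X} (hB : IsUpperSet B) (happ : ∀ x ∈ ⋂₀ F, approxes B x) :
    ∃ A ∈ F, A ⊆ B := by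
  by_contra! hcon
  obtain ⟨L, hL⟩ := zorn_superset
    {L : Set X | IsLowerSet L ∧ L ⊆ Bᶜ ∧ ∀ A ∈ F, (L ∩ A).Nonempty} (by
      intro c hcS hc
      rcases c.eq_empty_or_nonempty with rfl | hcne
      · refine ⟨Bᶜ, ⟨hB.compl, subset_rfl, fun A hA => ?_⟩, by simp⟩
        obtain ⟨x, hxA, hxB⟩ := not_subset.1 (hcon A hA)
        exact ⟨x, hxB, hxA⟩
      · refine ⟨⋂₀ c, ⟨isLowerSet_sInter fun L hL => (hcS hL).1, ?_, fun A hA => ?_⟩,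
          fun L hL => sInter_subset_of_mem hL⟩
        · obtain ⟨L, hL⟩ := hcne
          exact (sInter_subset_of_mem hL).trans (hcS hL).2.1
        · exact inter_sInter_nonempty hc hcne (fun L hL => (hcS hL).1) (hF A hA)
            fun L hL => (hcS hL).2.2 A hA)
  obtain ⟨hlow, hLB, hmeet⟩ := hL.prop
  -- Removing `↑x` from `L` keeps it a lower set, so by minimality it misses some member of `F`.
  have key : ∀ x ∈ L, ∃ A ∈ F, L ∩ A ⊆ Ici x := by
    intro x hx
    by_contra! hno
    have hmem : L \ Ici x ∈ {L : Set X | IsLowerSet L ∧ L ⊆ Bᶜ ∧ ∀ A ∈ F, (L ∩ A).Nonempty} := by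
      refine ⟨hlow.inter (isUpperSet_Ici x).compl, sdiff_subset.trans hLB, fun A hA => ?_⟩
      obtain ⟨y, hy, hyx⟩ := not_subset.1 (hno A hA)
      exact ⟨y, ⟨hy.1, hyx⟩, hy.2⟩
    exact (hL.le_of_le hmem sdiff_subset hx).2 self_mem_Ici
  have hLne : L.Nonempty := by
    obtain ⟨A, hA⟩ := hne
    exact (hmeet A hA).mono inter_subset_left
  have hLdir : DirectedOn (· ≤ ·) L := by
    intro x hx y hy
    obtain ⟨A, hA, hAx⟩ := key x hx
    obtain ⟨A', hA', hAy⟩ := key y hy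
    obtain ⟨C, hC, hCA, hCA'⟩ := hdir A hA A' hA'
    obtain ⟨z, hzL, hzC⟩ := hmeet C hC
    exact ⟨z, hzL, hAx ⟨hzL, hCA hzC⟩, hAy ⟨hzL, hCA' hzC⟩⟩
  obtain ⟨b, hb⟩ := hX L hLne hLdir
  have hbF : b ∈ ⋂₀ F := by
    intro A hA
    obtain ⟨z, hzL, hzA⟩ := hmeet A hA
    exact (hF A hA).isUpperSet (hb.1 hzL) hzA
  obtain ⟨z, hzL, hzB⟩ := happ b hbF L hLne hLdir b hb le_rfl
  exact hLB hzL hzB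

/-- Suprema in `Fin(X)` are intersections; this is the inclusion that is not immediate. -/
lemma mem_of_isLUB {d : Set (FinCompacts X)} {A : FinCompacts X} (hA : IsLUB d A) {x : X}
    (hx : ∀ B ∈ d, x ∈ B.1) : x ∈ A.1 := by
  have hub : (⟨Ici x, isFinitaryCompact_Ici x⟩ : FinCompacts X) ∈ upperBounds d :=
    fun B hB _ hy => B.2.isUpperSet hy (hx B hB)
  exact hA.2 hub (self_mem_Ici : x ∈ Ici x)

lemma scottOpen_box (hX : IsDcpo X) {U : Set X} (hU : ScottOpen U) :
    ScottOpen {A : FinCompacts X | A.1 ⊆ U} := by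
  refine ⟨fun A B hAB hA => Subset.trans hAB hA, fun d hd hdir A hA hAU => ?_⟩
  obtain ⟨_, ⟨B, hB, rfl⟩, hBU⟩ := exists_subset_of_approxes hX
    (F := Subtype.val '' d) (hd.image _) (by rintro _ ⟨B, -, rfl⟩; exact B.2)
    (by
      rintro _ ⟨B, hB, rfl⟩ _ ⟨C, hC, rfl⟩
      obtain ⟨D, hD, hBD, hCD⟩ := hdir B hB C hC
      exact ⟨D.1, mem_image_of_mem _ hD, hBD, hCD⟩)
    hU.1
    (fun x hx => hU.approxes (hAU (mem_of_isLUB hA fun B hB => hx _ (mem_image_of_mem _ hB))))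
  exact ⟨B, hB, hBU⟩

/-- Interpolation: Rudin's lemma is applied to the finitary compacts approximating some member
of a directed set `d`, whose intersection is `↑(sup d)`. -/
lemma scottOpen_approxes (hQ : IsQuasiContinuous X) {B : Set X} (hB : IsUpperSet B) :
    ScottOpen {x | approxes B x} := by
  refine ⟨fun x y hxy hx => hx.mono subset_rfl hxy, fun d hd hdir a ha hBa => ?_⟩
  obtain ⟨C, hC, hCB⟩ := exists_subset_of_approxes hQ.1 (F := ⋃ z ∈ d, finUpsBelow z)
    (by
      obtain ⟨z, hz⟩ := hd
      obtain ⟨C, hC⟩ := (hQ.2 z).1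
      exact ⟨C, mem_biUnion hz hC⟩)
    (by
      intro C hC
      obtain ⟨z, hz, hC⟩ := mem_iUnion₂.1 hC
      exact hC.1)
    (by
      intro C hC C' hC'
      obtain ⟨z, hz, hC⟩ := mem_iUnion₂.1 hC
      obtain ⟨z', hz', hC'⟩ := mem_iUnion₂.1 hC'
      obtain ⟨w, hw, hzw, hzw'⟩ := hdir z hz z' hz'
      obtain ⟨D, hD, hDC, hDC'⟩ := (hQ.2 w).2.1 C ⟨hC.1, hC.2.mono subset_rfl hzw⟩
        C' ⟨hC'.1, hC'.2.mono subset_rfl hzw'⟩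
      exact ⟨D, mem_biUnion hw hD, hDC, hDC'⟩)
    hB
    (by
      intro x hx
      refine hBa.mono subset_rfl (ha.2 fun z hz => ?_)
      have : x ∈ ⋂₀ finUpsBelow z := fun C hC => hx C (mem_biUnion hz hC)
      rwa [(hQ.2 z).2.2] at this)
  obtain ⟨z, hz, hC⟩ := mem_iUnion₂.1 hC
  exact ⟨z, hz, hC.2.mono hCB le_rfl⟩

/-- In a quasi-continuous dcpo, every Scott-open set containing `↑E` contains a finitary compact
`B` with `B ⋘ x` for all `x ∈ ↑E`. -/
lemma exists_approxes_mem (hQ : IsQuasiContinuous X) {S : Set (FinCompacts X)}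
    (hS : ScottOpen S) {A : FinCompacts X} (hA : A ∈ S) :
    ∃ B ∈ S, ∀ x ∈ A.1, approxes B.1 x := by
  obtain ⟨E, hE, hEne, hAE⟩ := A.2
  have hEA : E ⊆ A.1 := fun e he => hAE ▸ ⟨e, he, le_rfl⟩
  -- Approximants chosen at each `e ∈ E` are glued by taking their union.
  have glue : ∀ P : X → Prop, (∀ e ∈ E, ∃ C ∈ finUpsBelow e, ∀ y ∈ C, P y) →
      ∃ B : FinCompacts X, (∀ x ∈ A.1, approxes B.1 x) ∧ ∀ y ∈ B.1, P y := by
    intro P h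
    choose! C hC hP using h
    refine ⟨⟨⋃ e ∈ E, C e, .biUnion hE hEne fun e he => (hC e he).1⟩, fun x hx => ?_,
      fun y hy => ?_⟩
    · rw [hAE] at hx
      obtain ⟨e, he, hex⟩ := hx
      exact (hC e he).2.mono (subset_biUnion_of_mem (u := C) he) hex
    · obtain ⟨e, he, hy⟩ := mem_iUnion₂.1 hy
      exact hP e he y hy
  obtain ⟨B, hB, hBS⟩ := hS.2 {B : FinCompacts X | ∀ x ∈ A.1, approxes B.1 x}
    (by
      obtain ⟨B, hB, -⟩ := glue (fun _ => True) fun e _ =>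
        let ⟨C, hC⟩ := (hQ.2 e).1
        ⟨C, hC, fun _ _ => trivial⟩
      exact ⟨B, hB⟩)
    (by
      intro B hB B' hB'
      obtain ⟨D, hD, hDBB'⟩ := glue (fun y => y ∈ B.1 ∧ y ∈ B'.1) (by
        intro e he
        obtain ⟨C, hC, hCB, hCB'⟩ := (hQ.2 e).2.1 B.1 ⟨B.2, hB e (hEA he)⟩
          B'.1 ⟨B'.2, hB' e (hEA he)⟩
        exact ⟨C, hC, fun y hy => ⟨hCB hy, hCB' hy⟩⟩)
      exact ⟨D, hD, fun y hy => (hDBB' y hy).1, fun y hy => (hDBB' y hy).2⟩)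
    A
    (by
      refine ⟨fun B hB x hx => (hB x hx).mem, fun T hT x hx => ?_⟩
      by_contra hxA
      obtain ⟨B, hB, hxB⟩ := glue (fun y => y ≠ x) (by
        intro e he
        have hex : x ∉ ⋂₀ finUpsBelow e := by
          rw [(hQ.2 e).2.2]
          exact fun hex => hxA (A.2.isUpperSet hex (hEA he))
        obtain ⟨C, hC, hxC⟩ : ∃ C ∈ finUpsBelow e, x ∉ C := by simpa using hex
        exact ⟨C, hC, fun y hy hyx => hxC (hyx ▸ hy)⟩)
      exact hxB x (hT hB hx) rfl)
    hA
  exact ⟨B, hBS, hB⟩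

end

/-- For a dcpo `X`, on `Fin(X)` the Scott topology of reverse inclusion is finer than
the (subspace) upper Vietoris topology, and the two coincide when `X` is a
quasi-continuous dcpo. -/
theorem scott_finer_upperVietoris_on_finCompacts {X : Type u} [PartialOrder X]
    (hX : IsDcpo X) :
    (∀ S : Set (FinCompacts X),
      @IsOpen (FinCompacts X) (finUpperVietoris X) S →
        @IsOpen (FinCompacts X) (scottTop (FinCompacts X)) S) ∧
    (IsQuasiContinuous X → finUpperVietoris X = scottTop (FinCompacts X)) := by
  have hfiner : ∀ S : Set (FinCompacts X), @IsOpen (FinCompacts X) (finUpperVietoris X) S →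
      @IsOpen (FinCompacts X) (scottTop (FinCompacts X)) S := by
    have hle : scottTop (FinCompacts X) ≤ finUpperVietoris X := by
      refine le_generateFrom ?_
      rintro _ ⟨U, hU, rfl⟩
      exact scottOpen_box hX hU
    exact fun S hS => hle S hS
  refine ⟨hfiner, fun hQ => le_antisymm (fun S hS => ?_) hfiner⟩
  refine (@isOpen_iff_forall_mem_open _ (finUpperVietoris X) S).2 fun A hA => ?_
  obtain ⟨B, hBS, hB⟩ := exists_approxes_mem hQ hS hA
  refine ⟨{C : FinCompacts X | C.1 ⊆ {x | approxes B.1 x}}, fun C hC => ?_, ?_, hB⟩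
  · exact hS.1 (show B ≤ C from fun x hx => (hC hx).mem) hBS
  · exact isOpen_generateFrom_of_mem ⟨_, scottOpen_approxes hQ B.2.isUpperSet, rfl⟩
end
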